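/- arXiv:2503.00009 — 6 statements merged into one kernel-verified Lean document; each statement's English description precedes it below -/
import Mathlib

section
/- Let k be an infinite field, G a finite group, and V a linear representation of G over k. Let x ∈ V be a vector such that the family (g • x)_{g ∈ G} is linearly independent. Then for every y ∈ V, if T_2(y) = T_2(x) and T_3(y) = T_3(x), there exists g ∈ G with y = g • x. (That is, the G-orbit of any vector whose orbit consists of linearly independent vectors is uniquely determined by the second and third invariant tensors.) -/
open TensorProduct

/-!
Let `φ` be functionals dual to the linearly independent family `v`, and let `B = ∑ i, φ i ⊗ φ i`,
a bilinear form for which `v` is orthonormal. Equality of the second tensors of `v` and `w` says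
that the square matrix `φ i (w j)` is orthogonal, so `w` is orthonormal for `B` as well. Contracting
the third tensors with `φ i` and `B (w j, ·)` leaves a single term on each side, namely
`φ i (w j) • w j = φ i (w j) • v i`. Since `B (w j, w j) = 1`, some coefficient `φ i (w j)` is
nonzero and can be cancelled, so `w j = v i`. The theorem is the case where `v` and `w` are two
orbits.
-/

section Pairing

variable {R M ι κ μ : Type*} [CommSemiring R] [AddCommMonoid M] [Module R M]

/-- The matrix of values of a family of functionals on a family of vectors. The functionals `φ` are
dual to the vectors `v` when this matrix is `1`. -/
def pairingMatrix (φ : ι → Module.Dual R M) (v : κ → M) : Matrix ι κ R :=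
  Matrix.of fun i j => φ i (v j)

@[simp]
theorem pairingMatrix_apply (φ : ι → Module.Dual R M) (v : κ → M) (i : ι) (j : κ) :
    pairingMatrix φ v i j = φ i (v j) :=
  rfl

theorem injective_of_pairingMatrix_eq_one [DecidableEq ι] [Nontrivial R]
    {φ : ι → Module.Dual R M} {v : ι → M} (hφ : pairingMatrix φ v = 1) :
    Function.Injective v := by
  intro i j hij
  by_contra hne
  have hval : pairingMatrix φ v i i = pairingMatrix φ v i j := congrArg (φ i) hij
  rw [hφ, Matrix.one_apply_eq, Matrix.one_apply_ne hne] at hval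
  exact one_ne_zero hval

theorem pairingMatrix_mul_transpose_eq_of_sum_tmul_eq
    [Fintype κ] [Fintype μ] {v : κ → M} {w : μ → M}
    (h2 : ∑ i, w i ⊗ₜ[R] w i = ∑ i, v i ⊗ₜ[R] v i) (φ : ι → Module.Dual R M) :
    pairingMatrix φ w * (pairingMatrix φ w).transpose =
      pairingMatrix φ v * (pairingMatrix φ v).transpose := by
  ext i j
  simpa [Matrix.mul_apply] using
    congrArg (LinearMap.mul' R R ∘ₗ TensorProduct.map (φ i) (φ j)) h2

theorem sum_apply_mul_apply_smul_eq_of_sum_tmul_tmul_eq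
    [Fintype κ] [Fintype μ] {v : κ → M} {w : μ → M}
    (h3 : ∑ i, (w i ⊗ₜ[R] w i) ⊗ₜ[R] w i = ∑ i, (v i ⊗ₜ[R] v i) ⊗ₜ[R] v i)
    (α β : Module.Dual R M) :
    ∑ i, (α (w i) * β (w i)) • w i = ∑ i, (α (v i) * β (v i)) • v i := by
  simpa using congrArg
    (TensorProduct.lift (LinearMap.lsmul R M ∘ₗ LinearMap.mul' R R ∘ₗ TensorProduct.map α β)) h3

variable [Fintype ι]

/-- The functionals `B (w j, ·)` for the symmetric bilinear form `B = ∑ i, φ i ⊗ φ i`. They are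
dual to `w` exactly when `w` is orthonormal for `B`. -/
def gramDual (φ : ι → Module.Dual R M) (w : κ → M) : κ → Module.Dual R M :=
  fun j => ∑ i, φ i (w j) • φ i

theorem pairingMatrix_gramDual (φ : ι → Module.Dual R M) (w : κ → M) (u : μ → M) :
    pairingMatrix (gramDual φ w) u = (pairingMatrix φ w).transpose * pairingMatrix φ u := by
  ext i j
  simp [gramDual, Matrix.mul_apply]

variable {v w : ι → M}

theorem pairingMatrix_gramDual_eq_one [DecidableEq ι] {φ : ι → Module.Dual R M}
    (hφ : pairingMatrix φ v = 1) (h2 : ∑ i, w i ⊗ₜ[R] w i = ∑ i, v i ⊗ₜ[R] v i) :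
    pairingMatrix (gramDual φ w) w = 1 := by
  have horth : pairingMatrix φ w * (pairingMatrix φ w).transpose = 1 := by
    simpa [hφ] using pairingMatrix_mul_transpose_eq_of_sum_tmul_eq h2 φ
  rw [pairingMatrix_gramDual, mul_eq_one_comm, horth]

theorem apply_smul_eq_apply_smul_of_sum_tmul_eq [DecidableEq ι] {φ : ι → Module.Dual R M}
    (hφ : pairingMatrix φ v = 1) (h2 : ∑ i, w i ⊗ₜ[R] w i = ∑ i, v i ⊗ₜ[R] v i)
    (h3 : ∑ i, (w i ⊗ₜ[R] w i) ⊗ₜ[R] w i = ∑ i, (v i ⊗ₜ[R] v i) ⊗ₜ[R] v i) (i j : ι) :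
    φ i (w j) • w j = φ i (w j) • v i := by
  have hφv (l : ι) : φ i (v l) = (1 : Matrix ι ι R) i l := by rw [← hφ, pairingMatrix_apply]
  have hψw (l : ι) : gramDual φ w j (w l) = (1 : Matrix ι ι R) j l := by
    rw [← pairingMatrix_gramDual_eq_one hφ h2, pairingMatrix_apply]
  have hψv : gramDual φ w j (v i) = φ i (w j) := by
    rw [← pairingMatrix_apply, pairingMatrix_gramDual, hφ, mul_one, Matrix.transpose_apply,
      pairingMatrix_apply]
  simpa [hφv, hψw, hψv, Matrix.one_apply, ite_smul] using
    sum_apply_mul_apply_smul_eq_of_sum_tmul_tmul_eq h3 (φ i) (gramDual φ w j)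

theorem exists_apply_ne_zero_of_sum_tmul_eq [DecidableEq ι] [Nontrivial R]
    {φ : ι → Module.Dual R M} (hφ : pairingMatrix φ v = 1)
    (h2 : ∑ i, w i ⊗ₜ[R] w i = ∑ i, v i ⊗ₜ[R] v i) (j : ι) :
    ∃ i, φ i (w j) ≠ 0 := by
  by_contra! hzero
  have hnorm : gramDual φ w j (w j) = 1 := by
    rw [← pairingMatrix_apply, pairingMatrix_gramDual_eq_one hφ h2, Matrix.one_apply_eq]
  simp [gramDual, hzero] at hnorm

end Pairing

section Field

variable {k V ι : Type*} [Field k] [AddCommGroup V] [Module k V]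

theorem exists_pairingMatrix_eq_one_of_linearIndependent [DecidableEq ι] {v : ι → V}
    (hv : LinearIndependent k v) :
    ∃ φ : ι → Module.Dual k V, pairingMatrix φ v = 1 := by
  obtain ⟨L, hL⟩ := LinearMap.exists_leftInverse_of_injective
    (Finsupp.linearCombination k v) (LinearMap.ker_eq_bot.2 hv)
  refine ⟨fun i => Finsupp.lapply i ∘ₗ L, ?_⟩
  ext i j
  have hLv : L (v j) = Finsupp.single j 1 := by
    simpa using LinearMap.congr_fun hL (Finsupp.single j 1)
  simp [hLv, Finsupp.single_apply, Matrix.one_apply, eq_comm]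

theorem orbit_recovery_from_deg_le_three_invariants_general [Fintype ι] {v w : ι → V}
    (hv : LinearIndependent k v)
    (h2 : ∑ i, w i ⊗ₜ[k] w i = ∑ i, v i ⊗ₜ[k] v i)
    (h3 : ∑ i, (w i ⊗ₜ[k] w i) ⊗ₜ[k] w i = ∑ i, (v i ⊗ₜ[k] v i) ⊗ₜ[k] v i) :
    ∃ σ : Equiv.Perm ι, ∀ i, w i = v (σ i) := by
  classical
  obtain ⟨φ, hφ⟩ := exists_pairingMatrix_eq_one_of_linearIndependent hv
  have hmem (j : ι) : ∃ i, w j = v i := by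
    obtain ⟨i, hi⟩ := exists_apply_ne_zero_of_sum_tmul_eq hφ h2 j
    exact ⟨i, smul_right_injective V hi (apply_smul_eq_apply_smul_of_sum_tmul_eq hφ h2 h3 i j)⟩
  choose f hf using hmem
  have hw : Function.Injective w :=
    injective_of_pairingMatrix_eq_one (pairingMatrix_gramDual_eq_one hφ h2)
  have hfinj : Function.Injective f := fun i j hij => hw (by rw [hf, hf, hij])
  exact ⟨Equiv.ofBijective f (Finite.injective_iff_bijective.1 hfinj), hf⟩

end Field

/-- Let `k` be an infinite field, `G` a finite group, and `V` a linear
representation of `G` over `k`. If the orbit `(g • x)_{g ∈ G}` of `x` is linearly independent,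
then any `y` with the same second and third invariant tensors lies in the orbit of `x`. -/
theorem orbit_recovery_from_deg_le_three_invariants
    (k : Type*) [Field k] [Infinite k]
    (G : Type*) [Group G] [Fintype G]
    (V : Type*) [AddCommGroup V] [Module k V]
    (ρ : Representation k G V) (x : V)
    (hx : LinearIndependent k fun g : G => ρ g x)
    (y : V)
    (h2 : (∑ g : G, (ρ g y) ⊗ₜ[k] (ρ g y)) = ∑ g : G, (ρ g x) ⊗ₜ[k] (ρ g x))
    (h3 : (∑ g : G, ((ρ g y) ⊗ₜ[k] (ρ g y)) ⊗ₜ[k] (ρ g y)) =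
        ∑ g : G, ((ρ g x) ⊗ₜ[k] (ρ g x)) ⊗ₜ[k] (ρ g x)) :
    ∃ g : G, y = ρ g x := by
  obtain ⟨σ, hσ⟩ := orbit_recovery_from_deg_le_three_invariants_general hx h2 h3
  exact ⟨σ 1, by simpa using hσ 1⟩
end

section
/- Let k be an infinite field and G a finite group, and consider the left regular representation of G on the space of functions f : G → k, where (g • f)(h) = f(g⁻¹ h). If f : G → k is a function whose translates (g • f)_{g ∈ G} are linearly independent, then for every f' : G → k with T_2(f') = T_2(f) and T_3(f') = T_3(f) there exists g ∈ G with f' = g • f. In other words, invariants of degree at most three separate orbits of functions with linearly independent translates in the regular representation. -/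
open TensorProduct

/-- The left regular representation of a finite group `G` over `k`:
`(g • f) h = f (g⁻¹ * h)`. -/
def regularTranslate (k : Type*) [Field k] (G : Type*) [Group G]
    (g : G) (f : G → k) : G → k :=
  fun h => f (g⁻¹ * h)

/-!
Let `v` and `w` be finite families of the same size, `v` linearly independent, with equal second
and third tensors, and let `c a` be linear functionals dual to `v`. Contracting the second tensors
with `c a` gives `∑ j, c a (w j) • w j = v a`, so `w` spans at least the span of `v` and, having as
many members, is linearly independent with the same span. Contracting the third tensors with
`c a ⊗ c b` gives `∑ j, (c a (w j) * c b (w j)) • w j = δ a b • v a`. Comparing coefficients,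
`c a (w j) * c b (w j) = δ a b * c a (w j)`: the coordinates of each `w j` are orthogonal
idempotents of a field, so `w j`, being nonzero, is one of the `v a`.
-/

section Contraction

variable {R M N ι κ : Type*} [CommSemiring R] [AddCommMonoid M] [Module R M]
  [AddCommMonoid N] [Module R N] [Fintype ι] [Fintype κ]

theorem sum_dual_smul_eq_of_sum_tmul_eq {x : ι → M} {y : ι → N} {x' : κ → M} {y' : κ → N}
    (h : ∑ j, x' j ⊗ₜ[R] y' j = ∑ i, x i ⊗ₜ[R] y i) (φ : Module.Dual R M) :
    ∑ j, φ (x' j) • y' j = ∑ i, φ (x i) • y i := by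
  simpa only [map_sum, LinearMap.rTensor_tmul, TensorProduct.lid_tmul]
    using congrArg (fun t => TensorProduct.lid R N (φ.rTensor N t)) h

variable [DecidableEq ι] {v : ι → M} {w : κ → M} {c : ι → Module.Dual R M}

theorem sum_coord_smul_eq (hc : ∀ a i, c a (v i) = if a = i then 1 else 0)
    (h2 : ∑ j, w j ⊗ₜ[R] w j = ∑ i, v i ⊗ₜ[R] v i) (a : ι) :
    ∑ j, c a (w j) • w j = v a := by
  simpa [hc] using sum_dual_smul_eq_of_sum_tmul_eq h2 (c a)

theorem sum_coord_mul_coord_smul_eq (hc : ∀ a i, c a (v i) = if a = i then 1 else 0)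
    (h3 : ∑ j, (w j ⊗ₜ[R] w j) ⊗ₜ[R] w j = ∑ i, (v i ⊗ₜ[R] v i) ⊗ₜ[R] v i) (a b : ι) :
    ∑ j, (c a (w j) * c b (w j)) • w j = if a = b then v a else 0 := by
  have contracted :=
    sum_dual_smul_eq_of_sum_tmul_eq h3 (TensorProduct.dualDistrib R M M (c a ⊗ₜ c b))
  rcases eq_or_ne a b with rfl | hab
  · simpa [hc] using contracted
  · simpa [hc, hab] using contracted

theorem orthogonalIdempotents_coord (hc : ∀ a i, c a (v i) = if a = i then 1 else 0)
    (hw : LinearIndependent R w)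
    (h2 : ∑ j, w j ⊗ₜ[R] w j = ∑ i, v i ⊗ₜ[R] v i)
    (h3 : ∑ j, (w j ⊗ₜ[R] w j) ⊗ₜ[R] w j = ∑ i, (v i ⊗ₜ[R] v i) ⊗ₜ[R] v i) (j : κ) :
    OrthogonalIdempotents fun a => c a (w j) where
  idem a := by
    refine Fintype.linearIndependent_iffₛ.mp hw
      (fun j => c a (w j) * c a (w j)) (fun j => c a (w j)) ?_ j
    rw [sum_coord_mul_coord_smul_eq hc h3, if_pos rfl, sum_coord_smul_eq hc h2]
  ortho a b hab := by
    refine Fintype.linearIndependent_iffₛ.mp hw (fun j => c a (w j) * c b (w j)) 0 ?_ j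
    simp [sum_coord_mul_coord_smul_eq hc h3, hab]

theorem sum_coord_smul_eq_of_mem_span (hc : ∀ a i, c a (v i) = if a = i then 1 else 0) {x : M}
    (hx : x ∈ Submodule.span R (Set.range v)) : ∑ a, c a x • v a = x := by
  obtain ⟨r, rfl⟩ := (Submodule.mem_span_range_iff_exists_fun R).mp hx
  simp [hc]

end Contraction

theorem eq_single_one_of_orthogonalIdempotents {R ι : Type*} [Semiring R] [IsLeftCancelMulZero R]
    [DecidableEq ι] {e : ι → R} (he : OrthogonalIdempotents e) (hne : e ≠ 0) :
    ∃ i, e = Pi.single i 1 := by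
  obtain ⟨i, hi⟩ := Function.ne_iff.mp hne
  have hi_one : e i = 1 := (IsIdempotentElem.iff_eq_zero_or_one.mp (he.idem i)).resolve_left hi
  refine ⟨i, funext fun j => ?_⟩
  rcases eq_or_ne j i with rfl | hji
  · rw [hi_one, Pi.single_eq_same]
  · rw [Pi.single_eq_of_ne hji, ← mul_one (e j), ← hi_one, he.ortho hji]

section Span

variable {K V ι κ : Type*} [DivisionRing K] [AddCommGroup V] [Module K V] [Fintype ι] [Fintype κ]
  {v : ι → V} {w : κ → V}

theorem span_range_eq_of_le_of_card_le (hv : LinearIndependent K v)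
    (hle : Submodule.span K (Set.range v) ≤ Submodule.span K (Set.range w))
    (hcard : Fintype.card κ ≤ Fintype.card ι) :
    Submodule.span K (Set.range v) = Submodule.span K (Set.range w) := by
  have := FiniteDimensional.span_of_finite K (Set.finite_range w)
  refine Submodule.eq_of_le_of_finrank_le hle ?_
  calc Module.finrank K (Submodule.span K (Set.range w))
      ≤ Fintype.card κ := finrank_range_le_card w
    _ ≤ Fintype.card ι := hcard
    _ = Module.finrank K (Submodule.span K (Set.range v)) := (finrank_span_eq_card hv).symm

theorem linearIndependent_of_span_range_eq_of_card_le (hv : LinearIndependent K v)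
    (hspan : Submodule.span K (Set.range v) = Submodule.span K (Set.range w))
    (hcard : Fintype.card κ ≤ Fintype.card ι) : LinearIndependent K w := by
  rw [linearIndependent_iff_card_le_finrank_span, Set.finrank, ← hspan, finrank_span_eq_card hv]
  exact hcard

end Span

section VectorSpace

variable {k V ι κ : Type*} [Field k] [AddCommGroup V] [Module k V]

theorem exists_dual_family_of_linearIndependent [DecidableEq ι] {v : ι → V}
    (hv : LinearIndependent k v) :
    ∃ c : ι → Module.Dual k V, ∀ a i, c a (v i) = if a = i then 1 else 0 := by
  obtain ⟨Φ, hΦ⟩ := (Finsupp.linearCombination k v).exists_leftInverse_of_injective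
    (LinearMap.ker_eq_bot.mpr hv)
  refine ⟨fun a => Finsupp.lapply a ∘ₗ Φ, fun a i => ?_⟩
  have hΦv : Φ (v i) = Finsupp.single i 1 := by
    simpa using LinearMap.congr_fun hΦ (Finsupp.single i 1)
  simp [hΦv, Finsupp.single_apply, eq_comm]

variable [Fintype ι] [Fintype κ] {v : ι → V} {w : κ → V}

theorem exists_eq_of_sum_tmul_eq (hv : LinearIndependent k v)
    (hcard : Fintype.card κ ≤ Fintype.card ι)
    (h2 : ∑ j, w j ⊗ₜ[k] w j = ∑ i, v i ⊗ₜ[k] v i)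
    (h3 : ∑ j, (w j ⊗ₜ[k] w j) ⊗ₜ[k] w j = ∑ i, (v i ⊗ₜ[k] v i) ⊗ₜ[k] v i) (j : κ) :
    ∃ i, w j = v i := by
  classical
  obtain ⟨c, hc⟩ := exists_dual_family_of_linearIndependent hv
  have hle : Submodule.span k (Set.range v) ≤ Submodule.span k (Set.range w) := by
    rw [Submodule.span_le, Set.range_subset_iff]
    exact fun a => (Submodule.mem_span_range_iff_exists_fun k).mpr ⟨_, sum_coord_smul_eq hc h2 a⟩
  have hspan := span_range_eq_of_le_of_card_le hv hle hcard
  have hw := linearIndependent_of_span_range_eq_of_card_le hv hspan hcard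
  have hexpand : ∑ a, c a (w j) • v a = w j :=
    sum_coord_smul_eq_of_mem_span hc (hspan ▸ Submodule.subset_span (Set.mem_range_self j))
  have hne : (fun a => c a (w j)) ≠ 0 := fun hzero => hw.ne_zero j <| by
    rw [← hexpand]
    exact Finset.sum_eq_zero fun a _ => by rw [congrFun hzero a, Pi.zero_apply, zero_smul]
  obtain ⟨i, hi⟩ :=
    eq_single_one_of_orthogonalIdempotents (orthogonalIdempotents_coord hc hw h2 h3 j) hne
  refine ⟨i, ?_⟩
  rw [← hexpand, ← Fintype.linearCombination_apply, hi, Fintype.linearCombination_apply_single,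
    one_smul]

end VectorSpace

theorem regular_representation_orbit_recovery_general {k G V : Type*} [Field k] [Monoid G]
    [Fintype G] [AddCommGroup V] [Module k V] (ρ : Representation k G V) {x x' : V}
    (hx : LinearIndependent k fun g => ρ g x)
    (h2 : ∑ g, ρ g x' ⊗ₜ[k] ρ g x' = ∑ g, ρ g x ⊗ₜ[k] ρ g x)
    (h3 : ∑ g, (ρ g x' ⊗ₜ[k] ρ g x') ⊗ₜ[k] ρ g x' = ∑ g, (ρ g x ⊗ₜ[k] ρ g x) ⊗ₜ[k] ρ g x) :
    ∃ g, x' = ρ g x := by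
  simpa only [map_one, Module.End.one_apply] using exists_eq_of_sum_tmul_eq hx le_rfl h2 h3 1

/-- The left regular representation of `G` on the space of all functions `G → k`, bundling
`regularTranslate`; Mathlib's `Representation.leftRegular` acts on finitely supported functions
instead. -/
def regularRepresentation (k : Type*) [Field k] (G : Type*) [Group G] :
    Representation k G (G → k) where
  toFun g :=
    { toFun := regularTranslate k G g
      map_add' := fun _ _ => rfl
      map_smul' := fun _ _ => rfl }
  map_one' := LinearMap.ext fun f => funext fun x => congrArg f (by rw [inv_one, one_mul])
  map_mul' g h := LinearMap.ext fun f => funext fun x =>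
    congrArg f (by rw [mul_inv_rev, mul_assoc])

/-- In the regular representation of a finite group `G` over an infinite
field `k`, a function whose translates are linearly independent is determined, up to the
action of `G`, by its second and third invariant tensors. -/
theorem regular_representation_orbit_recovery
    (k : Type*) [Field k] [Infinite k]
    (G : Type*) [Group G] [Fintype G]
    (f : G → k)
    (hf : LinearIndependent k fun g : G => regularTranslate k G g f)
    (f' : G → k)
    (h2 : (∑ g : G, (regularTranslate k G g f') ⊗ₜ[k] (regularTranslate k G g f')) =
        ∑ g : G, (regularTranslate k G g f) ⊗ₜ[k] (regularTranslate k G g f))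
    (h3 : (∑ g : G, ((regularTranslate k G g f') ⊗ₜ[k] (regularTranslate k G g f'))
          ⊗ₜ[k] (regularTranslate k G g f')) =
        ∑ g : G, ((regularTranslate k G g f) ⊗ₜ[k] (regularTranslate k G g f))
          ⊗ₜ[k] (regularTranslate k G g f)) :
    ∃ g : G, f' = regularTranslate k G g f :=
  regular_representation_orbit_recovery_general (regularRepresentation k G) hf h2 h3
end

section
/- Let G be a finite group and k an infinite field, and consider the left regular representation of G on functions f : G → k, where (g • f)(h) = f(g⁻¹ h). The polynomial function f ↦ det M(f), where M(f) is the |G| × |G| matrix with entries M(f)_{g,h} = f(g⁻¹ h), is not identically zero, and for any f : G → k the translates (g • f)_{g ∈ G} are linearly independent if and only if det M(f) ≠ 0. Consequently the set of functions with linearly independent translates is the nonvanishing locus of a nonzero polynomial (i.e. is generic). -/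
/-- The group matrix of `f : G → k`, with entries `M(f)_{g,h} = f (g⁻¹ * h)`. -/
def groupMatrix (k : Type*) [Field k] (G : Type*) [Group G]
    (f : G → k) : Matrix G G k :=
  Matrix.of fun g h => f (g⁻¹ * h)

section

variable {k : Type*} [Field k] {G : Type*} [Group G] [DecidableEq G]

theorem groupMatrix_single_one : groupMatrix k G (Pi.single 1 1) = 1 := by
  ext g h
  simp [groupMatrix, Matrix.one_apply, Pi.single_apply, inv_mul_eq_one]

theorem linearIndependent_translates_iff_det_groupMatrix_ne_zero [Fintype G] (f : G → k) :
    LinearIndependent k (fun g h : G => f (g⁻¹ * h)) ↔ (groupMatrix k G f).det ≠ 0 :=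
  calc LinearIndependent k (groupMatrix k G f).row
    _ ↔ (groupMatrix k G f).Nonsingular := Matrix.linearIndependent_row_iff
    _ ↔ (groupMatrix k G f).det ≠ 0 := Matrix.nonsingular_iff_det_ne_zero

end

theorem group_matrix_det_characterizes_linear_independence_general
    (k : Type*) [Field k] (G : Type*) [Group G] [Fintype G] [DecidableEq G] :
    (∃ f : G → k, (groupMatrix k G f).det ≠ 0) ∧
      ∀ f : G → k,
        (LinearIndependent k fun g : G => (fun h => f (g⁻¹ * h) : G → k)) ↔
          (groupMatrix k G f).det ≠ 0 := by
  refine ⟨⟨Pi.single 1 1, ?_⟩, linearIndependent_translates_iff_det_groupMatrix_ne_zero⟩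
  rw [groupMatrix_single_one, Matrix.det_one]
  exact one_ne_zero

/-- For a finite group `G` and an infinite field `k`, the polynomial
function `f ↦ det M(f)` is not identically zero, and the translates
`(g • f)_{g ∈ G}`, `(g • f) h = f (g⁻¹ h)`, are linearly independent iff `det M(f) ≠ 0`.
Hence the set of functions with linearly independent translates is the nonvanishing locus
of a nonzero polynomial. -/
theorem group_matrix_det_characterizes_linear_independence
    (k : Type*) [Field k] [Infinite k]
    (G : Type*) [Group G] [Fintype G] [DecidableEq G] :
    (∃ f : G → k, (groupMatrix k G f).det ≠ 0) ∧
      ∀ f : G → k,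
        (LinearIndependent k fun g : G => (fun h => f (g⁻¹ * h) : G → k)) ↔
          (groupMatrix k G f).det ≠ 0 :=
  group_matrix_det_characterizes_linear_independence_general k G
end

section
/- Let G be a finite group acting linearly on a vector space V over a field k, and let x ∈ V be such that the family (g • x)_{g ∈ G} is linearly independent. Then the range of the linear map V* → V sending a functional f to ∑_{g ∈ G} f(g • x) · (g • x) equals the linear span of the orbit {g • x : g ∈ G}. (That is, the span of the orbit can be recovered from the second invariant tensor T_2(x) = ∑_{g ∈ G} (g • x) ⊗ (g • x).) -/
/-!
The map `f ↦ ∑ i, f (v i) • w i` factors as the evaluation `f ↦ (f (v i))ᵢ` followed by the linear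
combination map `c ↦ ∑ i, c i • w i`, whose range is the span of `w`. Over a field, functionals take
arbitrary prescribed values on a linearly independent family, so the evaluation is surjective.
-/

theorem exists_linearMap_apply_eq_of_linearIndependent {K ι V W : Type*} [DivisionRing K]
    [AddCommGroup V] [Module K V] [AddCommGroup W] [Module K W] {v : ι → V}
    (hv : LinearIndependent K v) (w : ι → W) :
    ∃ f : V →ₗ[K] W, ∀ i, f (v i) = w i := by
  obtain ⟨coord, hcoord⟩ := (Finsupp.linearCombination K v).exists_leftInverse_of_injective
    (LinearMap.ker_eq_bot.mpr hv)
  have coord_apply (i : ι) : coord (v i) = Finsupp.single i 1 := by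
    simpa using LinearMap.congr_fun hcoord (Finsupp.single i 1)
  exact ⟨Finsupp.linearCombination K w ∘ₗ coord, fun i => by simp [coord_apply]⟩

theorem range_pi_dual_eval_eq_top {K ι V : Type*} [Field K] [AddCommGroup V] [Module K V]
    {v : ι → V} (hv : LinearIndependent K v) :
    LinearMap.range (LinearMap.pi fun i => Module.Dual.eval K V (v i)) = ⊤ := by
  refine LinearMap.range_eq_top.mpr fun c => ?_
  obtain ⟨f, hf⟩ := exists_linearMap_apply_eq_of_linearIndependent hv c
  exact ⟨f, funext hf⟩

theorem sum_dual_eval_smulRight_eq_comp {R ι M N : Type*} [CommSemiring R] [Fintype ι]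
    [AddCommMonoid M] [Module R M] [AddCommMonoid N] [Module R N] (v : ι → M) (w : ι → N) :
    ∑ i, (Module.Dual.eval R M (v i)).smulRight (w i) =
      Fintype.linearCombination R w ∘ₗ LinearMap.pi fun i => Module.Dual.eval R M (v i) := by
  ext f
  simp [Fintype.linearCombination_apply]

theorem range_of_second_invariant_tensor_map_general {K ι V W : Type*} [Field K] [Fintype ι]
    [AddCommGroup V] [Module K V] [AddCommGroup W] [Module K W] {v : ι → V}
    (hv : LinearIndependent K v) (w : ι → W) :
    LinearMap.range (∑ i, (Module.Dual.eval K V (v i)).smulRight (w i)) =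
      Submodule.span K (Set.range w) := by
  rw [sum_dual_eval_smulRight_eq_comp,
    LinearMap.range_comp_of_range_eq_top _ (range_pi_dual_eval_eq_top hv),
    Fintype.range_linearCombination]

/-- If the orbit `(g • x)_{g ∈ G}` is linearly independent, then the range
of the linear map `V* → V`, `f ↦ ∑ g, f (g • x) • (g • x)` (the map induced by the second
invariant tensor `T₂(x)`) is the span of the orbit. -/
theorem range_of_second_invariant_tensor_map
    (k : Type*) [Field k]
    (G : Type*) [Group G] [Fintype G]
    (V : Type*) [AddCommGroup V] [Module k V]
    (ρ : Representation k G V) (x : V)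
    (hx : LinearIndependent k fun g : G => ρ g x) :
    LinearMap.range (∑ g : G, (Module.Dual.eval k V (ρ g x)).smulRight (ρ g x)) =
      Submodule.span k (Set.range fun g : G => ρ g x) :=
  range_of_second_invariant_tensor_map_general hx _
end

section
/- Let k be an infinite field and let x_1, …, x_n be linearly independent vectors in a k-vector space V. Then there exist linear functionals a, b ∈ V* such that a(x_i) ≠ 0 and b(x_i) ≠ 0 for all i, and the ratios a(x_i)/b(x_i) are pairwise distinct, i.e. a(x_i)·b(x_j) ≠ a(x_j)·b(x_i) for all i ≠ j. -/
/-!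
Over an infinite field, some functional avoids zero on any given finite family of nonzero vectors.
Take `b` nonzero on every `x i`, and then `a` nonzero on every `x i` and on the vectors
`b (x j) • x i - b (x i) • x j` with `i ≠ j`: these are nonzero as soon as the `x i` are pairwise
linearly independent, and `a` sends them to `a (x i) * b (x j) - a (x j) * b (x i)`.
-/

open Module

theorem smul_sub_smul_ne_zero_of_linearIndepOn_pair {R M ι : Type*} [Ring R] [AddCommGroup M]
    [Module R M] {v : ι → M} {i j : ι} (hv : LinearIndepOn R v {i, j}) (hij : i ≠ j)
    {c : R} (hc : c ≠ 0) (d : R) : c • v i - d • v j ≠ 0 := by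
  intro h
  rw [sub_eq_add_neg, ← neg_smul] at h
  exact hc ((LinearIndepOn.pair_iff v hij).mp hv c (-d) h).1

section

variable {k V ι : Type*} [Field k] [Infinite k] [AddCommGroup V] [Module k V] [Finite ι]

theorem exists_dual_ne_zero_and_mul_ne_mul {x : ι → V}
    (hx : Pairwise fun i j ↦ LinearIndepOn k x {i, j}) {b : Dual k V} (hb : ∀ i, b (x i) ≠ 0) :
    ∃ a : Dual k V, (∀ i, a (x i) ≠ 0) ∧
      ∀ i j, i ≠ j → a (x i) * b (x j) ≠ a (x j) * b (x i) := by
  let avoided : ι ⊕ {p : ι × ι // p.1 ≠ p.2} → V :=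
    Sum.elim x fun p ↦ b (x p.1.2) • x p.1.1 - b (x p.1.1) • x p.1.2
  have avoided_ne_zero : ∀ s, avoided s ≠ 0 := by
    rintro (i | ⟨⟨i, j⟩, hij⟩)
    · exact ne_zero_of_map (hb i)
    · exact smul_sub_smul_ne_zero_of_linearIndepOn_pair (hx hij) hij (hb j) (b (x i))
  obtain ⟨a, ha⟩ : ∃ a : Dual k V, ∀ s, a (avoided s) ≠ 0 :=
    exists_dual_forall_apply_ne_zero avoided avoided_ne_zero
  refine ⟨a, fun i ↦ ha (.inl i), fun i j hij h ↦ ha (.inr ⟨(i, j), hij⟩) ?_⟩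
  calc a (b (x j) • x i - b (x i) • x j)
      = a (x i) * b (x j) - a (x j) * b (x i) := by
        simp only [map_sub, map_smul, smul_eq_mul, mul_comm]
    _ = 0 := sub_eq_zero.mpr h

theorem exists_functionals_with_distinct_ratios_general {x : ι → V} (x_ne_zero : ∀ i, x i ≠ 0)
    (hx : Pairwise fun i j ↦ LinearIndepOn k x {i, j}) :
    ∃ a b : Dual k V, (∀ i, a (x i) ≠ 0) ∧ (∀ i, b (x i) ≠ 0) ∧
      ∀ i j, i ≠ j → a (x i) * b (x j) ≠ a (x j) * b (x i) := by
  obtain ⟨b, hb⟩ : ∃ b : Dual k V, ∀ i, b (x i) ≠ 0 :=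
    exists_dual_forall_apply_ne_zero x x_ne_zero
  obtain ⟨a, ha, hab⟩ := exists_dual_ne_zero_and_mul_ne_mul hx hb
  exact ⟨a, b, ha, hb, hab⟩

end

/-- Over an infinite field, given linearly independent vectors
`x_1, …, x_n`, there are linear functionals `a`, `b` that are nonzero on each `x_i` and such
that the ratios `a(x_i)/b(x_i)` are pairwise distinct. -/
theorem exists_functionals_with_distinct_ratios
    (k : Type*) [Field k] [Infinite k]
    (V : Type*) [AddCommGroup V] [Module k V]
    (n : ℕ) (x : Fin n → V) (hx : LinearIndependent k x) :
    ∃ a b : Module.Dual k V,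
      (∀ i, a (x i) ≠ 0) ∧ (∀ i, b (x i) ≠ 0) ∧
        ∀ i j, i ≠ j → a (x i) * b (x j) ≠ a (x j) * b (x i) :=
  exists_functionals_with_distinct_ratios_general hx.ne_zero fun _ _ _ ↦
    hx.linearIndepOn_univ.mono (Set.subset_univ _)
end

section
/- Let n ≥ 3 be odd and let the dihedral group D_n act on V = ℂⁿ × ℂ, where D_n acts on ℂⁿ by the standard representation ((r • x)_i = x_{i-1}, (s • x)_i = x_{-i}) and on the second factor ℂ by the character S_0 on which the rotation r acts trivially and the reflection s acts by −1. Then for every x ∈ ℂⁿ and every s_0 ∈ ℂ, the vectors (x, s_0) and (x, −s_0) have equal invariant tensors of degree at most three: T_1(x, s_0) = T_1(x, −s_0), T_2(x, s_0) = T_2(x, −s_0), and T_3(x, s_0) = T_3(x, −s_0). -/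
open TensorProduct

/-- The standard representation of `D_n` on `ℂⁿ`: `(r • x)_i = x_{i-1}`, `(s • x)_i = x_{-i}`. -/
def dihedralStdAct (n : ℕ) : DihedralGroup n → (ZMod n → ℂ) → (ZMod n → ℂ)
  | DihedralGroup.r j, x => fun i => x (i - j)
  | DihedralGroup.sr j, x => fun i => x (-i - j)

/-- The character `S₀` of `D_n`: the rotation acts trivially and the reflection acts by `-1`. -/
def dihedralCharS0 (n : ℕ) : DihedralGroup n → ℂ
  | DihedralGroup.r _ => 1
  | DihedralGroup.sr _ => -1

/-- The action of `D_n` on `V = ℂⁿ × ℂ`, the standard representation plus the character `S₀`. -/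
def dihedralActS0 (n : ℕ) (g : DihedralGroup n) (v : (ZMod n → ℂ) × ℂ) : (ZMod n → ℂ) × ℂ :=
  (dihedralStdAct n g v.1, dihedralCharS0 n g * v.2)

/-!
Write `aₖ` and `bₖ` for the images of `(x, 0)` under the rotations and the reflections, and `e`
for `(0, s₀)`. Then `T_d(x, s₀) = ∑ₖ (aₖ + e)^{⊗d} + ∑ₖ (bₖ - e)^{⊗d}`, so `T_d(x, s₀)` and
`T_d(x, -s₀)` agree as soon as `∑ₖ (aₖ + e)^{⊗d} - ∑ₖ (bₖ + e)^{⊗d}` is unchanged by `e ↦ -e`.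
The families `a` and `b` have the same moments of degrees one and two, because the autocorrelation
`∑ₖ x(i - k) x(j - k)` depends only on `±(i - j)`. Hence for `d ≤ 3`, expanding
`∑ₖ (aₖ + e)^{⊗d} - ∑ₖ (bₖ + e)^{⊗d}` multilinearly, every term containing `e` cancels.
-/

section SecondMoment

variable {ι R M : Type*} [Fintype ι] [CommSemiring R] [AddCommMonoid M] [Module R M]
  {a b : ι → M}

lemma sum_map_tmul_self_eq {P : Type*} [AddCommMonoid P] [Module R P] (f : M →ₗ[R] P)
    (h : ∑ k, a k ⊗ₜ[R] a k = ∑ k, b k ⊗ₜ[R] b k) :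
    ∑ k, f (a k) ⊗ₜ[R] f (a k) = ∑ k, f (b k) ⊗ₜ[R] f (b k) := by
  simpa using congrArg (TensorProduct.map f f) h

lemma sum_tmul_self_add_const_eq (h₁ : ∑ k, a k = ∑ k, b k)
    (h₂ : ∑ k, a k ⊗ₜ[R] a k = ∑ k, b k ⊗ₜ[R] b k) (e : M) :
    ∑ k, (a k + e) ⊗ₜ[R] (a k + e) = ∑ k, (b k + e) ⊗ₜ[R] (b k + e) := by
  simp only [add_tmul, tmul_add, Finset.sum_add_distrib, ← sum_tmul, ← tmul_sum, h₁, h₂]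

end SecondMoment

section ThirdMoment

variable {ι R M : Type*} [Fintype ι] [CommSemiring R] [AddCommGroup M] [Module R M]
  {a b : ι → M}

lemma sum_tmul_tmul_self_add_const_sub (h₁ : ∑ k, a k = ∑ k, b k)
    (h₂ : ∑ k, a k ⊗ₜ[R] a k = ∑ k, b k ⊗ₜ[R] b k) (e : M) :
    ∑ k, ((a k + e) ⊗ₜ[R] (a k + e)) ⊗ₜ[R] (a k + e) -
        ∑ k, ((b k + e) ⊗ₜ[R] (b k + e)) ⊗ₜ[R] (b k + e) =
      ∑ k, (a k ⊗ₜ[R] a k) ⊗ₜ[R] a k - ∑ k, (b k ⊗ₜ[R] b k) ⊗ₜ[R] b k := by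
  have e_left : ∑ k, (e ⊗ₜ[R] a k) ⊗ₜ[R] a k = ∑ k, (e ⊗ₜ[R] b k) ⊗ₜ[R] b k := by
    simpa using congrArg ((mk R M M e).rTensor M) h₂
  have e_middle : ∑ k, (a k ⊗ₜ[R] e) ⊗ₜ[R] a k = ∑ k, (b k ⊗ₜ[R] e) ⊗ₜ[R] b k := by
    simpa using congrArg (((mk R M M).flip e).rTensor M) h₂
  simp only [add_tmul, tmul_add, Finset.sum_add_distrib, ← sum_tmul, ← tmul_sum, h₁, h₂,
    e_left, e_middle]
  abel

end ThirdMoment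

section Translates

variable {A R : Type*} [AddCommGroup A] [Fintype A]

lemma sum_translate_eq_sum_reflect [AddCommMonoid R] (x : A → R) :
    ∑ k, (fun i => x (i - k)) = ∑ k, fun i => x (-i - k) := by
  ext i
  simp only [Finset.sum_apply]
  exact ((Equiv.subLeft i).sum_comp x).trans ((Equiv.subLeft (-i)).sum_comp x).symm

lemma autocorrelation_neg [NonUnitalNonAssocCommSemiring R] (x : A → R) (i j : A) :
    ∑ k, x (-i - k) * x (-j - k) = ∑ k, x (i - k) * x (j - k) := by
  rw [← Equiv.sum_comp (Equiv.addRight (i + j)) fun k => x (i - k) * x (j - k)]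
  refine Finset.sum_congr rfl fun k _ => ?_
  have swap_left : i - (k + (i + j)) = -j - k := by abel
  have swap_right : j - (k + (i + j)) = -i - k := by abel
  rw [Equiv.coe_addRight, swap_left, swap_right, mul_comm]

lemma sum_translate_tmul_self_eq_sum_reflect [CommSemiring R] (x : A → R) :
    ∑ k, (fun i => x (i - k)) ⊗ₜ[R] (fun i => x (i - k)) =
      ∑ k, (fun i => x (-i - k)) ⊗ₜ[R] (fun i => x (-i - k)) := by
  classical
  refine ((Pi.basisFun R A).tensorProduct (Pi.basisFun R A)).ext_elem fun ⟨i, j⟩ => ?_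
  simpa using (autocorrelation_neg x j i).symm

end Translates

section Dihedral

variable {n : ℕ} [NeZero n] {N : Type*}

lemma sum_dihedralGroup [AddCommMonoid N] (f : DihedralGroup n → N) :
    ∑ g, f g = ∑ k : ZMod n, f (.r k) + ∑ k : ZMod n, f (.sr k) := by
  simp [← DihedralGroup.equivSum.symm.sum_comp]

lemma sum_dihedralActS0_neg_of_sub_eq [AddCommGroup N] (F : (ZMod n → ℂ) × ℂ → N)
    (x : ZMod n → ℂ) (s : ℂ)
    (h : ∑ k, F (fun i => x (i - k), s) - ∑ k, F (fun i => x (-i - k), s) =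
      ∑ k, F (fun i => x (i - k), -s) - ∑ k, F (fun i => x (-i - k), -s)) :
    ∑ g, F (dihedralActS0 n g (x, s)) = ∑ g, F (dihedralActS0 n g (x, -s)) := by
  simpa [sum_dihedralGroup, dihedralActS0, dihedralStdAct, dihedralCharS0] using
    sub_eq_sub_iff_add_eq_add.mp h

end Dihedral

theorem dihedral_S0_sign_ambiguity_odd_general
    (n : ℕ) [NeZero n] (x : ZMod n → ℂ) (s₀ : ℂ) :
    (∑ g : DihedralGroup n, dihedralActS0 n g (x, s₀)) =
      (∑ g : DihedralGroup n, dihedralActS0 n g (x, -s₀)) ∧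
    (∑ g : DihedralGroup n, (dihedralActS0 n g (x, s₀)) ⊗ₜ[ℂ] (dihedralActS0 n g (x, s₀))) =
      (∑ g : DihedralGroup n, (dihedralActS0 n g (x, -s₀)) ⊗ₜ[ℂ] (dihedralActS0 n g (x, -s₀))) ∧
    (∑ g : DihedralGroup n,
        ((dihedralActS0 n g (x, s₀)) ⊗ₜ[ℂ] (dihedralActS0 n g (x, s₀)))
          ⊗ₜ[ℂ] (dihedralActS0 n g (x, s₀))) =
      (∑ g : DihedralGroup n,
        ((dihedralActS0 n g (x, -s₀)) ⊗ₜ[ℂ] (dihedralActS0 n g (x, -s₀)))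
          ⊗ₜ[ℂ] (dihedralActS0 n g (x, -s₀))) := by
  have degree_one (s : ℂ) :
      ∑ k, ((fun i => x (i - k), s) : (ZMod n → ℂ) × ℂ) = ∑ k, (fun i => x (-i - k), s) := by
    rw [← prod_mk_sum, ← prod_mk_sum, sum_translate_eq_sum_reflect]
  have inl_degree_two :
      ∑ k, ((fun i => x (i - k), 0) : (ZMod n → ℂ) × ℂ) ⊗ₜ[ℂ] (fun i => x (i - k), (0 : ℂ)) =
        ∑ k, (fun i => x (-i - k), 0) ⊗ₜ[ℂ] (fun i => x (-i - k), 0) :=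
    sum_map_tmul_self_eq (.inl ℂ (ZMod n → ℂ) ℂ) (sum_translate_tmul_self_eq_sum_reflect x)
  have degree_two (s : ℂ) := sum_tmul_self_add_const_eq (degree_one 0) inl_degree_two (0, s)
  have degree_three (s : ℂ) :=
    sum_tmul_tmul_self_add_const_sub (degree_one 0) inl_degree_two (0, s)
  simp only [Prod.mk_add_mk, add_zero, zero_add] at degree_two degree_three
  refine ⟨sum_dihedralActS0_neg_of_sub_eq id x s₀ ?_,
    sum_dihedralActS0_neg_of_sub_eq (fun v => v ⊗ₜ[ℂ] v) x s₀ ?_,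
    sum_dihedralActS0_neg_of_sub_eq (fun v => (v ⊗ₜ[ℂ] v) ⊗ₜ[ℂ] v) x s₀ ?_⟩
  · simp only [id, degree_one, sub_self]
  · simp only [degree_two, sub_self]
  · exact (degree_three s₀).trans (degree_three (-s₀)).symm

/-- For odd `n ≥ 3` and the action of `D_n` on `ℂⁿ × ℂ` (standard
representation plus the character `S₀`), the vectors `(x, s₀)` and `(x, -s₀)` have equal
invariant tensors of degree at most three. -/
theorem dihedral_S0_sign_ambiguity_odd
    (n : ℕ) [NeZero n] (hn : 3 ≤ n) (hodd : Odd n)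
    (x : ZMod n → ℂ) (s₀ : ℂ) :
    (∑ g : DihedralGroup n, dihedralActS0 n g (x, s₀)) =
      (∑ g : DihedralGroup n, dihedralActS0 n g (x, -s₀)) ∧
    (∑ g : DihedralGroup n, (dihedralActS0 n g (x, s₀)) ⊗ₜ[ℂ] (dihedralActS0 n g (x, s₀))) =
      (∑ g : DihedralGroup n, (dihedralActS0 n g (x, -s₀)) ⊗ₜ[ℂ] (dihedralActS0 n g (x, -s₀))) ∧
    (∑ g : DihedralGroup n,
        ((dihedralActS0 n g (x, s₀)) ⊗ₜ[ℂ] (dihedralActS0 n g (x, s₀)))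
          ⊗ₜ[ℂ] (dihedralActS0 n g (x, s₀))) =
      (∑ g : DihedralGroup n,
        ((dihedralActS0 n g (x, -s₀)) ⊗ₜ[ℂ] (dihedralActS0 n g (x, -s₀)))
          ⊗ₜ[ℂ] (dihedralActS0 n g (x, -s₀))) :=
  dihedral_S0_sign_ambiguity_odd_general n x s₀
end
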